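/- (Govil's inequality) Let P be a complex polynomial of degree n ≥ 1 all of whose zeros lie in |z| ≤ k with k ≥ 1. Then max_{|z|=1}|P′(z)| ≥ (n/(1 + k^n))·max_{|z|=1}|P(z)|. -/

import Mathlib

open Polynomial Metric

/-- The maximum of `|P(z)|` over the circle `|z| = r`. -/
noncomputable def maxMod (P : Polynomial ℂ) (r : ℝ) : ℝ :=
  ⨆ z : sphere (0 : ℂ) r, ‖P.eval (z : ℂ)‖

/-!
Write `n = deg P` and let `P*(z) = zⁿ conj (P (1 / conj z))` be the conjugate-reciprocal polynomial.
If the zeros of `P` lie in `|z| ≤ 1`, the logarithmic derivative gives `Re (z P' / P) ≥ n / 2` on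
the unit circle, that is `|n P - z P'| ≤ |P'|` there. By Gauss–Lucas, `(P')*` has no zeros
in `|z| < 1`, so the maximum principle extends this to `|n P - z P'| ≤ |(P')*|` on the whole disc.
If the zeros only lie in `|z| ≤ k`, apply this to `P(kz)` on `|z| = 1 / k`: it bounds
`|n P - z P'|` on the unit circle by a power of `k` times `|P'|` on `|z| = k²`, hence by
`kⁿ max |P'|`. The triangle inequality `n |P| ≤ |n P - z P'| + |P'|` concludes.
-/

open Filter Topology
open scoped ComplexConjugate

section MaxMod

variable {P : ℂ[X]} {r : ℝ}

lemma norm_eval_le_maxMod {z : ℂ} (hz : ‖z‖ = r) : ‖P.eval z‖ ≤ maxMod P r := by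
  have hcont : Continuous fun z : sphere (0 : ℂ) r => ‖P.eval (z : ℂ)‖ := by fun_prop
  exact le_ciSup (isCompact_range hcont).bddAbove ⟨z, by simpa using hz⟩

lemma maxMod_le (hr : 0 ≤ r) {B : ℝ} (h : ∀ z : ℂ, ‖z‖ = r → ‖P.eval z‖ ≤ B) :
    maxMod P r ≤ B := by
  have : Nonempty (sphere (0 : ℂ) r) := (NormedSpace.sphere_nonempty.2 hr).to_subtype
  exact ciSup_le fun z => h z (by simp)

end MaxMod

/-- The conjugate-reciprocal polynomial `P*(z) = zⁿ conj (P (1 / conj z))`, where `n` is the degree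
of `P`; on the unit circle it has the same modulus as `P`. -/
noncomputable def conjReciprocal (P : ℂ[X]) : ℂ[X] := (P.map (starRingEnd ℂ)).reverse

lemma eval_conjReciprocal (P : ℂ[X]) {z : ℂ} (hz : z ≠ 0) :
    (conjReciprocal P).eval z = z ^ P.natDegree * conj (P.eval (conj z)⁻¹) := by
  let _ : Invertible z⁻¹ := invertibleOfNonzero (inv_ne_zero hz)
  have hrev := eval₂_reverse_mul_pow (RingHom.id ℂ) z⁻¹ (P.map (starRingEnd ℂ))
  have hconj : (P.map (starRingEnd ℂ)).eval z⁻¹ = conj (P.eval (conj z)⁻¹) := by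
    rw [← eval_map_apply, map_inv₀, Complex.conj_conj]
  rw [invOf_eq_inv, inv_inv, natDegree_map, ← eval, ← eval, hconj] at hrev
  rw [conjReciprocal, ← hrev, inv_pow]
  field_simp

lemma norm_eval_conjReciprocal (P : ℂ[X]) {z : ℂ} (hz : z ≠ 0) :
    ‖(conjReciprocal P).eval z‖ = ‖z‖ ^ P.natDegree * ‖P.eval (conj z)⁻¹‖ := by
  rw [eval_conjReciprocal P hz, norm_mul, norm_pow, RCLike.norm_conj]

lemma norm_eval_conjReciprocal_of_norm_eq_one (P : ℂ[X]) {z : ℂ} (hz : ‖z‖ = 1) :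
    ‖(conjReciprocal P).eval z‖ = ‖P.eval z‖ := by
  have hz₀ : z ≠ 0 := norm_ne_zero_iff.1 (by simp [hz])
  rw [norm_eval_conjReciprocal P hz₀, hz, one_pow, one_mul, ← Complex.inv_eq_conj hz, inv_inv]

lemma eval_zero_conjReciprocal_ne_zero {P : ℂ[X]} (hP : P ≠ 0) :
    (conjReciprocal P).eval 0 ≠ 0 := by
  simpa [conjReciprocal, ← coeff_zero_eq_eval_zero] using hP

lemma one_le_norm_of_isRoot_conjReciprocal {P : ℂ[X]} (hroots : ∀ w, P.IsRoot w → ‖w‖ ≤ 1)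
    {w : ℂ} (hw : (conjReciprocal P).IsRoot w) : 1 ≤ ‖w‖ := by
  have hP : P ≠ 0 := by
    rintro rfl
    simpa using hroots 2 (by simp)
  have hw₀ : w ≠ 0 := by
    rintro rfl
    exact eval_zero_conjReciprocal_ne_zero hP hw
  have hroot : P.IsRoot (conj w)⁻¹ := by simpa [eval_conjReciprocal P hw₀, hw₀] using hw.eq_zero
  have hle := hroots _ hroot
  rwa [norm_inv, RCLike.norm_conj, inv_le_one₀ (norm_pos_iff.2 hw₀)] at hle

lemma norm_le_of_forall_norm_eq_one {f : ℂ → ℂ} (hf : DiffContOnCl ℂ f (ball 0 1)) {B : ℝ}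
    (hB : ∀ z, ‖z‖ = 1 → ‖f z‖ ≤ B) {z : ℂ} (hz : ‖z‖ ≤ 1) : ‖f z‖ ≤ B := by
  refine Complex.norm_le_of_forall_mem_frontier_norm_le isBounded_ball hf (fun w hw => ?_) ?_
  · rw [frontier_ball _ one_ne_zero] at hw
    exact hB w (by simpa using hw)
  · rw [closure_ball _ one_ne_zero]
    simpa using hz

lemma norm_eval_le_pow_mul_maxMod (P : ℂ[X]) {u : ℂ} (hu : 1 ≤ ‖u‖) :
    ‖P.eval u‖ ≤ ‖u‖ ^ P.natDegree * maxMod P 1 := by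
  have hu₀ : 0 < ‖u‖ := one_pos.trans_le hu
  have hle : ‖(conjReciprocal P).eval (conj u)⁻¹‖ ≤ maxMod P 1 :=
    norm_le_of_forall_norm_eq_one (conjReciprocal P).differentiable.diffContOnCl
      (fun z hz => (norm_eval_conjReciprocal_of_norm_eq_one P hz).trans_le (norm_eval_le_maxMod hz))
      (by simpa using inv_le_one_of_one_le₀ hu)
  rwa [norm_eval_conjReciprocal P (by simpa using hu₀), map_inv₀, Complex.conj_conj, inv_inv,
    norm_inv, RCLike.norm_conj, inv_pow, inv_mul_le_iff₀ (by positivity)] at hle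

lemma mul_norm_sub_le_norm_smul_sub {E : Type*} [NormedAddCommGroup E] [InnerProductSpace ℝ E]
    {z w : E} (hzw : ‖z‖ ≤ ‖w‖) {t : ℝ} (ht₀ : 0 ≤ t) (ht₁ : t ≤ 1) :
    t * ‖z - w‖ ≤ ‖t • z - w‖ := by
  have hinner : inner ℝ z w ≤ ‖w‖ ^ 2 := by
    nlinarith [real_inner_le_norm z w, norm_nonneg w]
  refine le_of_sq_le_sq ?_ (norm_nonneg _)
  rw [mul_pow, norm_sub_sq_real, norm_sub_sq_real, norm_smul, Real.norm_of_nonneg ht₀,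
    real_inner_smul_left]
  nlinarith [mul_le_mul_of_nonneg_left hinner (mul_nonneg ht₀ (sub_nonneg.2 ht₁)),
    mul_nonneg (sq_nonneg (1 - t)) (sq_nonneg ‖w‖)]

lemma pow_mul_norm_eval_le_norm_eval_mul {Q : ℂ[X]} {z : ℂ} (hroots : ∀ w ∈ Q.roots, ‖z‖ ≤ ‖w‖)
    {t : ℝ} (ht₀ : 0 ≤ t) (ht₁ : t ≤ 1) :
    t ^ Q.natDegree * ‖Q.eval z‖ ≤ ‖Q.eval (t * z)‖ := by
  have hsplits := IsAlgClosed.splits Q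
  have hnorm (x : ℂ) :
      ‖Q.eval x‖ = ‖Q.leadingCoeff‖ * (Q.roots.map fun w => ‖x - w‖).prod := by
    rw [hsplits.eval_eq_prod_roots, norm_mul, ← normHom_apply (Multiset.prod _),
      map_multiset_prod, Multiset.map_map]
    rfl
  have hprod : (Q.roots.map fun w => t * ‖z - w‖).prod ≤
      (Q.roots.map fun w => ‖(t : ℂ) * z - w‖).prod :=
    Multiset.prod_map_le_prod_map₀ _ _ (fun w _ => by positivity) fun w hw => by
      simpa using mul_norm_sub_le_norm_smul_sub (hroots w hw) ht₀ ht₁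
  rw [Multiset.prod_map_mul, Multiset.map_const', Multiset.prod_replicate,
    ← hsplits.natDegree_eq_card_roots] at hprod
  rw [hnorm, hnorm, mul_left_comm]
  gcongr

lemma norm_le_norm_of_forall_norm_eq_one {f g : ℂ → ℂ} (hf : DiffContOnCl ℂ f (ball 0 1))
    (hg : DiffContOnCl ℂ g (ball 0 1)) (hg₀ : ∀ z, ‖z‖ ≤ 1 → g z ≠ 0)
    (hle : ∀ z, ‖z‖ = 1 → ‖f z‖ ≤ ‖g z‖) {z : ℂ} (hz : ‖z‖ ≤ 1) : ‖f z‖ ≤ ‖g z‖ := by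
  have hginv : DiffContOnCl ℂ g⁻¹ (ball 0 1) := hg.inv fun x hx => by
    rw [closure_ball _ one_ne_zero] at hx
    exact hg₀ x (by simpa using hx)
  have hquot : ‖(g⁻¹ • f) z‖ ≤ 1 :=
    norm_le_of_forall_norm_eq_one (hginv.smul hf) (fun x hx => by
      simpa [← div_eq_inv_mul] using div_le_one_of_le₀ (hle x hx) (norm_nonneg _)) hz
  rwa [Pi.smul_apply', Pi.inv_apply, norm_smul, norm_inv,
    inv_mul_le_one₀ (norm_pos_iff.2 (hg₀ z hz))] at hquot

-- Zeros of `Q` on the unit circle would spoil `f / Q`, so compare with `Q (t * z)`, `t → 1⁻`.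
lemma norm_le_norm_eval_of_forall_norm_eq_one {f : ℂ → ℂ} (hf : DiffContOnCl ℂ f (ball 0 1))
    {Q : ℂ[X]} (hroots : ∀ w, Q.IsRoot w → 1 ≤ ‖w‖) (hle : ∀ z, ‖z‖ = 1 → ‖f z‖ ≤ ‖Q.eval z‖)
    {z : ℂ} (hz : ‖z‖ ≤ 1) : ‖f z‖ ≤ ‖Q.eval z‖ := by
  have hcontract (t : ℝ) (ht : t ∈ Set.Ioo 0 1) :
      t ^ Q.natDegree * ‖f z‖ ≤ ‖Q.eval (t * z)‖ := by
    have hnorm (x : ℂ) : ‖(t : ℂ) ^ Q.natDegree * f x‖ = t ^ Q.natDegree * ‖f x‖ := by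
      rw [norm_mul, norm_pow, Complex.norm_of_nonneg ht.1.le]
    rw [← hnorm]
    refine norm_le_norm_of_forall_norm_eq_one (f := fun x => (t : ℂ) ^ Q.natDegree * f x)
      (g := fun x => Q.eval ((t : ℂ) * x)) (hf.const_smul ((t : ℂ) ^ Q.natDegree))
      (Differentiable.diffContOnCl (by fun_prop)) (fun x hx h => ?_) (fun x hx => ?_) hz
    · have hone := hroots _ h
      rw [norm_mul, Complex.norm_of_nonneg ht.1.le] at hone
      nlinarith [ht.1, ht.2]
    · calc ‖(t : ℂ) ^ Q.natDegree * f x‖ = t ^ Q.natDegree * ‖f x‖ := hnorm x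
        _ ≤ t ^ Q.natDegree * ‖Q.eval x‖ :=
          mul_le_mul_of_nonneg_left (hle x hx) (pow_nonneg ht.1.le _)
        _ ≤ ‖Q.eval (t * x)‖ := pow_mul_norm_eval_le_norm_eval_mul
          (fun w hw => hx.trans_le (hroots w (isRoot_of_mem_roots hw))) ht.1.le ht.2.le
  have hleft : Tendsto (fun t : ℝ => t ^ Q.natDegree * ‖f z‖) (𝓝[<] 1) (𝓝 ‖f z‖) :=
    tendsto_nhdsWithin_of_tendsto_nhds <| Continuous.tendsto' (by fun_prop) _ _ (by simp)
  have hright : Tendsto (fun t : ℝ => ‖Q.eval (t * z)‖) (𝓝[<] 1) (𝓝 ‖Q.eval z‖) :=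
    tendsto_nhdsWithin_of_tendsto_nhds <| Continuous.tendsto' (by fun_prop) _ _ (by simp)
  exact le_of_tendsto_of_tendsto hleft hright
    (Filter.eventually_of_mem (Ioo_mem_nhdsLT one_pos) hcontract)

section Laguerre

lemma one_half_le_re_div_sub {u w : ℂ} (h : ‖w‖ ≤ ‖u‖) (hne : u ≠ w) :
    1 / 2 ≤ (u / (u - w)).re := by
  have hpos : 0 < Complex.normSq (u - w) := Complex.normSq_pos.2 (sub_ne_zero.2 hne)
  have hsq : Complex.normSq w ≤ Complex.normSq u := by
    rw [Complex.normSq_eq_norm_sq, Complex.normSq_eq_norm_sq]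
    gcongr
  rw [Complex.div_re, ← add_div, le_div_iff₀ hpos]
  simp only [Complex.normSq_apply, Complex.sub_re, Complex.sub_im] at hsq ⊢
  nlinarith

variable {P : ℂ[X]} {u : ℂ}

lemma natDegree_div_two_le_re_mul_logDeriv (hu : P.eval u ≠ 0)
    (hroots : ∀ w ∈ P.roots, ‖w‖ ≤ ‖u‖) :
    (P.natDegree : ℝ) / 2 ≤ (u * (P.derivative.eval u / P.eval u)).re := by
  have hsplits := IsAlgClosed.splits P
  have hterm : ∀ x ∈ P.roots.map (fun w => (u / (u - w)).re), 1 / 2 ≤ x := by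
    intro x hx
    obtain ⟨w, hw, rfl⟩ := Multiset.mem_map.1 hx
    exact one_half_le_re_div_sub (hroots w hw) fun h => hu (h ▸ isRoot_of_mem_roots hw)
  calc (P.natDegree : ℝ) / 2
      = (P.roots.map fun w => (u / (u - w)).re).card • (1 / 2 : ℝ) := by
        rw [Multiset.card_map, ← hsplits.natDegree_eq_card_roots, nsmul_eq_mul, mul_one_div]
    _ ≤ (P.roots.map fun w => (u / (u - w)).re).sum := Multiset.card_nsmul_le_sum hterm
    _ = (u * (P.derivative.eval u / P.eval u)).re := by
        rw [hsplits.eval_derivative_div_eval_of_ne_zero hu, ← Multiset.sum_map_mul_left,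
          ← Complex.reLm_coe, map_multiset_sum, Multiset.map_map]
        simp only [Function.comp_def, Complex.reLm_coe, mul_one_div]

lemma norm_sub_le_norm_of_div_two_le_re {a : ℝ} (ha : 0 ≤ a) {s : ℂ} (h : a / 2 ≤ s.re) :
    ‖a - s‖ ≤ ‖s‖ := by
  rw [← sq_le_sq₀ (norm_nonneg _) (norm_nonneg _), ← Complex.normSq_eq_norm_sq,
    ← Complex.normSq_eq_norm_sq, Complex.normSq_apply, Complex.normSq_apply]
  simp only [Complex.sub_re, Complex.sub_im, Complex.ofReal_re, Complex.ofReal_im]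
  nlinarith

lemma norm_natDegree_mul_eval_sub_le (hroots : ∀ w ∈ P.roots, ‖w‖ ≤ ‖u‖) :
    ‖P.natDegree * P.eval u - u * P.derivative.eval u‖ ≤ ‖u * P.derivative.eval u‖ := by
  by_cases hu : P.eval u = 0
  · simp [hu]
  have hle := norm_sub_le_norm_of_div_two_le_re P.natDegree.cast_nonneg
    (natDegree_div_two_le_re_mul_logDeriv hu hroots)
  calc ‖P.natDegree * P.eval u - u * P.derivative.eval u‖
      = ‖((P.natDegree : ℝ) : ℂ) - u * (P.derivative.eval u / P.eval u)‖ * ‖P.eval u‖ := by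
        rw [← norm_mul, sub_mul, Complex.ofReal_natCast]
        field_simp
    _ ≤ ‖u * (P.derivative.eval u / P.eval u)‖ * ‖P.eval u‖ := by gcongr
    _ = ‖u * P.derivative.eval u‖ := by
        rw [← norm_mul]
        field_simp

end Laguerre

lemma norm_le_of_isRoot_derivative {P : ℂ[X]} (hP : P.natDegree ≠ 0) {r : ℝ}
    (hroots : ∀ w, P.IsRoot w → ‖w‖ ≤ r) {z : ℂ} (hz : P.derivative.IsRoot z) : ‖z‖ ≤ r := by
  have hdeg : 0 < P.degree := natDegree_pos_iff_degree_pos.1 (Nat.pos_of_ne_zero hP)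
  have hP' : P.derivative ≠ 0 := mt derivative_eq_zero.1 hP
  have hsub : P.rootSet ℂ ⊆ closedBall 0 r := fun w hw => by
    simpa using hroots w (by simpa using (mem_rootSet.1 hw).2)
  have hmem : z ∈ closedBall (0 : ℂ) r :=
    convexHull_min hsub (convex_closedBall 0 r)
      (rootSet_derivative_subset_convexHull_rootSet hdeg (mem_rootSet.2 ⟨hP', by simpa using hz⟩))
  simpa using hmem

lemma norm_natDegree_mul_eval_sub_le_norm_eval_conjReciprocal {P : ℂ[X]} (hP : P.natDegree ≠ 0)
    (hroots : ∀ w, P.IsRoot w → ‖w‖ ≤ 1) {z : ℂ} (hz : ‖z‖ ≤ 1) :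
    ‖P.natDegree * P.eval z - z * P.derivative.eval z‖ ≤
      ‖(conjReciprocal P.derivative).eval z‖ := by
  refine norm_le_norm_eval_of_forall_norm_eq_one
    (f := fun z => P.natDegree * P.eval z - z * P.derivative.eval z)
    (Differentiable.diffContOnCl (by fun_prop))
    (fun w => one_le_norm_of_isRoot_conjReciprocal
      fun x => norm_le_of_isRoot_derivative hP hroots) (fun x hx => ?_) hz
  calc ‖P.natDegree * P.eval x - x * P.derivative.eval x‖
      ≤ ‖x * P.derivative.eval x‖ := norm_natDegree_mul_eval_sub_le fun w hw =>
        (hroots w (isRoot_of_mem_roots hw)).trans hx.ge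
    _ = ‖(conjReciprocal P.derivative).eval x‖ := by
        rw [norm_mul, hx, one_mul, norm_eval_conjReciprocal_of_norm_eq_one _ hx]

section Govil

variable {P : ℂ[X]} {k : ℝ} {z : ℂ}

lemma pow_mul_norm_natDegree_mul_eval_sub_le (hP : P.natDegree ≠ 0) (hk : 1 ≤ k)
    (hroots : ∀ w, P.IsRoot w → ‖w‖ ≤ k) (hz : ‖z‖ = 1) :
    k ^ (P.natDegree - 1) * ‖P.natDegree * P.eval z - z * P.derivative.eval z‖ ≤
      k * ‖P.derivative.eval (k ^ 2 * z)‖ := by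
  have hk₀ : 0 < k := one_pos.trans_le hk
  have hkℂ : (k : ℂ) ≠ 0 := Complex.ofReal_ne_zero.2 hk₀.ne'
  have hz₀ : z ≠ 0 := norm_ne_zero_iff.1 (by simp [hz])
  set G := P.comp (C (k : ℂ) * X) with hG
  have hdeg : G.natDegree = P.natDegree := by
    rw [hG, natDegree_comp, natDegree_C_mul_X _ hkℂ, mul_one]
  have heval (x : ℂ) : G.eval x = P.eval (k * x) := by simp [hG]
  have heval' (x : ℂ) : G.derivative.eval x = k * P.derivative.eval (k * x) := by
    simp [hG, derivative_comp]
  have hGroots (w : ℂ) (hw : G.IsRoot w) : ‖w‖ ≤ 1 := by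
    have hle := hroots (k * w) (by rwa [IsRoot, ← heval])
    rwa [norm_mul, Complex.norm_of_nonneg hk₀.le, mul_le_iff_le_one_right hk₀] at hle
  have hv : ‖z / k‖ = k⁻¹ := by rw [norm_div, hz, Complex.norm_of_nonneg hk₀.le, one_div]
  have hinv : (conj (z / k))⁻¹ = k * z := by
    rw [map_div₀, Complex.conj_ofReal, inv_div, ← Complex.inv_eq_conj hz, div_inv_eq_mul]
  have hle := norm_natDegree_mul_eval_sub_le_norm_eval_conjReciprocal (hdeg ▸ hP) hGroots
    (z := z / k) (hv ▸ inv_le_one_of_one_le₀ hk)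
  have hcancel : z / k * (k * P.derivative.eval z) = z * P.derivative.eval z := by field_simp
  rw [norm_eval_conjReciprocal _ (div_ne_zero hz₀ hkℂ), natDegree_derivative, hdeg, hv, hinv,
    heval, heval', heval', mul_div_cancel₀ _ hkℂ, hcancel, norm_mul (k : ℂ),
    Complex.norm_of_nonneg hk₀.le, inv_pow, le_inv_mul_iff₀ (by positivity), ← mul_assoc (k : ℂ),
    ← pow_two] at hle
  exact hle

lemma norm_natDegree_mul_eval_sub_le_pow_mul_maxMod (hP : P.natDegree ≠ 0) (hk : 1 ≤ k)
    (hroots : ∀ w, P.IsRoot w → ‖w‖ ≤ k) (hz : ‖z‖ = 1) :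
    ‖P.natDegree * P.eval z - z * P.derivative.eval z‖ ≤
      k ^ P.natDegree * maxMod P.derivative 1 := by
  have hnorm : ‖(k : ℂ) ^ 2 * z‖ = k ^ 2 := by
    rw [norm_mul, hz, mul_one, norm_pow, Complex.norm_of_nonneg (by positivity)]
  have hgrowth := norm_eval_le_pow_mul_maxMod P.derivative (hnorm ▸ one_le_pow₀ hk)
  rw [hnorm, natDegree_derivative] at hgrowth
  refine le_of_mul_le_mul_left ?_ (by positivity : 0 < k ^ (P.natDegree - 1))
  calc k ^ (P.natDegree - 1) * ‖P.natDegree * P.eval z - z * P.derivative.eval z‖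
      ≤ k * ‖P.derivative.eval (k ^ 2 * z)‖ :=
        pow_mul_norm_natDegree_mul_eval_sub_le hP hk hroots hz
    _ ≤ k * ((k ^ 2) ^ (P.natDegree - 1) * maxMod P.derivative 1) := by gcongr
    _ = k ^ (P.natDegree - 1) * (k ^ P.natDegree * maxMod P.derivative 1) := by
        rw [← mul_pow_sub_one hP k]
        ring

lemma natDegree_mul_norm_eval_le (hP : P.natDegree ≠ 0) (hk : 1 ≤ k)
    (hroots : ∀ w, P.IsRoot w → ‖w‖ ≤ k) (hz : ‖z‖ = 1) :
    P.natDegree * ‖P.eval z‖ ≤ (1 + k ^ P.natDegree) * maxMod P.derivative 1 :=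
  calc P.natDegree * ‖P.eval z‖
      = ‖z * P.derivative.eval z + (P.natDegree * P.eval z - z * P.derivative.eval z)‖ := by
        rw [add_sub_cancel, norm_mul, Complex.norm_natCast]
    _ ≤ ‖z * P.derivative.eval z‖ + ‖P.natDegree * P.eval z - z * P.derivative.eval z‖ :=
        norm_add_le _ _
    _ ≤ maxMod P.derivative 1 + k ^ P.natDegree * maxMod P.derivative 1 := by
        rw [norm_mul, hz, one_mul]
        exact add_le_add (norm_eval_le_maxMod hz)
          (norm_natDegree_mul_eval_sub_le_pow_mul_maxMod hP hk hroots hz)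
    _ = (1 + k ^ P.natDegree) * maxMod P.derivative 1 := by ring

end Govil

theorem stmt_10 (n : ℕ) (hn : 1 ≤ n) (P : Polynomial ℂ) (hdeg : P.natDegree = n)
    (k : ℝ) (hk : 1 ≤ k) (hroots : ∀ w : ℂ, P.IsRoot w → ‖w‖ ≤ k) :
    maxMod (Polynomial.derivative P) 1 ≥ ((n : ℝ) / (1 + k ^ n)) * maxMod P 1 := by
  subst hdeg
  have hn₀ : (0 : ℝ) < P.natDegree := Nat.cast_pos.2 hn
  have hmax : maxMod P 1 ≤ (1 + k ^ P.natDegree) * maxMod P.derivative 1 / P.natDegree :=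
    maxMod_le zero_le_one fun z hz => (le_div_iff₀' hn₀).2 <|
      natDegree_mul_norm_eval_le (Nat.one_le_iff_ne_zero.1 hn) hk hroots hz
  rw [ge_iff_le, div_mul_eq_mul_div, div_le_iff₀' (by positivity)]
  exact (le_div_iff₀' hn₀).1 hmax
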